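/- The subgroup ⟨σ, τ, λ₃₀⟩ of GL(3,ℂ) is the internal direct product of the three subgroups S(2,1), ⟨diag(ζ₅, ζ₅, 1)⟩ and ⟨diag(1, 1, ζ₃₀)⟩; in particular it is isomorphic to SL(2,5) × ℤ/5 × ℤ/30 and has order 18000. -/

import Mathlib

noncomputable section
open Matrix

def zeta5 : ℂ := Complex.exp (2 * Real.pi * Complex.I / 5)

def sqrt5 : ℂ := zeta5 - zeta5 ^ 2 - zeta5 ^ 3 + zeta5 ^ 4

def alpha : Matrix (Fin 2) (Fin 2) ℂ := -(Matrix.of ![![zeta5 ^ 3, 0], ![0, zeta5 ^ 2]])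
def beta : Matrix (Fin 2) (Fin 2) ℂ := Matrix.of ![![0, 1], ![-1, 0]]
def gamma : Matrix (Fin 2) (Fin 2) ℂ :=
  (zeta5 ^ 2 - zeta5 ^ 3)⁻¹ •
    Matrix.of ![![zeta5 + zeta5⁻¹, 1], ![1, -(zeta5 + zeta5⁻¹)]]

/-- The block-diagonal embedding of a `2 × 2` matrix into `GL(3)`, with last diagonal entry 1. -/
def emb (A : Matrix (Fin 2) (Fin 2) ℂ) : Matrix (Fin 3) (Fin 3) ℂ :=
  Matrix.of ![![A 0 0, A 0 1, 0], ![A 1 0, A 1 1, 0], ![0, 0, 1]]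

def alpha' : Matrix (Fin 3) (Fin 3) ℂ := emb alpha
def beta' : Matrix (Fin 3) (Fin 3) ℂ := emb beta
def gamma' : Matrix (Fin 3) (Fin 3) ℂ := emb gamma

def sigma : Matrix (Fin 3) (Fin 3) ℂ :=
  Matrix.of ![![(zeta5 - zeta5 ^ 4) / sqrt5, (zeta5 ^ 3 - zeta5 ^ 2) / sqrt5, 0],
    ![(zeta5 ^ 3 - zeta5 ^ 2) / sqrt5, -((zeta5 - zeta5 ^ 4) / sqrt5), 0],
    ![0, 0, 1]]

def tau : Matrix (Fin 3) (Fin 3) ℂ := Matrix.diagonal ![zeta5, 1, 1]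

def rho : Matrix (Fin 3) (Fin 3) ℂ := Matrix.diagonal ![zeta5 ^ 3, zeta5 ^ 2, 1]

/-- The subgroup of `GL(3, ℂ)` generated by the invertible matrices in `S`. -/
def gen3 (S : Set (Matrix (Fin 3) (Fin 3) ℂ)) : Subgroup (GL (Fin 3) ℂ) :=
  Subgroup.closure {g : GL (Fin 3) ℂ | (g : Matrix (Fin 3) (Fin 3) ℂ) ∈ S}

/-- `S(2,1) = ⟨α', β', γ'⟩`. -/
def S21 : Subgroup (GL (Fin 3) ℂ) := gen3 {alpha', beta', gamma'}

abbrev SL25 := Matrix.SpecialLinearGroup (Fin 2) (ZMod 5)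

def lambda30 : Matrix (Fin 3) (Fin 3) ℂ :=
  Matrix.diagonal ![1, 1, Complex.exp (2 * Real.pi * Complex.I / 30)]

/-- `⟨σ, τ, λ₃₀⟩`. -/
def Gt30 : Subgroup (GL (Fin 3) ℂ) := gen3 {sigma, tau, lambda30}

/-- The cyclic subgroup generated by `diag(ζ₅, ζ₅, 1)`. -/
def Dz : Subgroup (GL (Fin 3) ℂ) := gen3 {Matrix.diagonal ![zeta5, zeta5, 1]}

/-- The cyclic subgroup generated by `diag(1, 1, ζ₃₀)`. -/
def L30 : Subgroup (GL (Fin 3) ℂ) := gen3 {lambda30}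

/-!
In the coordinates given by the values at `1` and `3`, the odd part `ρ` of the Weil representation
of `SL₂(𝔽₅)` on functions on `𝔽₅` sends `S = !![0, -1; 1, 0]` to the upper left block of `σ` and
`T = !![1, 1; 0, 1]` to `diag(ζ₅³, ζ₅²) = ζ₅⁻² diag(ζ₅, 1)`. Moreover `ρ (-T) = α`,
`ρ (diag(2, 2⁻¹)) = β` and `ρ S = γ * β`, so that `α`, `β`, `γ` generate the image of `ρ`. Hence all
the groups are images of subgroups of `SL₂(𝔽₅) × μ₅ × μ₃₀` under `((g, u), v) ↦ diag(u • ρ g, v)`.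

This homomorphism is injective. A normal subgroup of `SL₂(𝔽₅)` that does not contain `-1` is
trivial and `ρ (-1) = -1`, so `ρ` is faithful. As `SL₂(𝔽₅)` is perfect, `det (ρ g) = 1`, so a
scalar `u` in the image of `ρ` satisfies `u² = 1`, which forces `u = 1` if also `u⁵ = 1`.

Finally `⟨σ, τ, λ₃₀⟩` is the whole image: `σ` and `τ` come from `(S, 1)` and `(T, ζ₅³)`, and
`(S * T) ^ 6 = 1`, so the sixth power of `(S, 1) * (T, ζ₅³)` is `(1, ζ₅³)`.
-/

open scoped MatrixGroups

section Group

variable {G M : Type*} [Group G]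

theorem map_mul_of_closure_eq_top [Monoid M] [IsDedekindFiniteMonoid M] {f : G → M} {s : Set G}
    (hs : Subgroup.closure s = ⊤) (one : f 1 = 1) (mul : ∀ x ∈ s, ∀ g, f (x * g) = f x * f g)
    (x g : G) : f (x * g) = f x * f g := by
  induction hs ▸ Subgroup.mem_top x using Subgroup.closure_induction generalizing g with
  | mem x hx => exact mul x hx g
  | one => simp [one]
  | mul x y _ _ hx hy => rw [mul_assoc, hx, hy, hx, mul_assoc]
  | inv x _ hx =>
    have right_inv : f x * f x⁻¹ = 1 := by rw [← hx, mul_inv_cancel, one]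
    have left_inv : f x⁻¹ * f x = 1 := mul_eq_one_symm right_inv
    calc f (x⁻¹ * g)
      _ = f x⁻¹ * (f x * f (x⁻¹ * g)) := by rw [← mul_assoc, left_inv, one_mul]
      _ = f x⁻¹ * f g := by rw [← hx, mul_inv_cancel_left]

theorem map_eq_one_of_commutator_eq_top [CommMonoid M] (hG : commutator G = ⊤) (f : G →* M)
    (g : G) : f g = 1 := by
  have commutator_le : commutator G ≤ f.toHomUnits.ker := Abelianization.commutator_subset_ker _
  have toHomUnits_eq_one : f.toHomUnits g = 1 := commutator_le (hG ▸ Subgroup.mem_top g)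
  simpa using congrArg Units.val toHomUnits_eq_one

theorem closure_inl_union_inr_eq_top {H : Type*} [Group H] {s : Set G} {t : Set H}
    (hs : Subgroup.closure s = ⊤) (ht : Subgroup.closure t = ⊤) :
    Subgroup.closure (MonoidHom.inl G H '' s ∪ MonoidHom.inr G H '' t) = ⊤ := by
  rw [Subgroup.closure_union, ← MonoidHom.map_closure, ← MonoidHom.map_closure, hs, ht,
    Subgroup.eq_top_iff']
  rintro ⟨x, y⟩
  rw [← Prod.fst_mul_snd (x, y)]
  exact Subgroup.mul_mem_sup ⟨x, trivial, rfl⟩ ⟨y, trivial, rfl⟩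

end Group

section InternalProduct

variable {A B G : Type*} [Group A] [Group B] [Group G] (f : A × B →* G)

theorem mul_comm_of_mem_range_inl_inr {x y : G} (hx : x ∈ (f.comp (MonoidHom.inl A B)).range)
    (hy : y ∈ (f.comp (MonoidHom.inr A B)).range) : x * y = y * x := by
  obtain ⟨a, rfl⟩ := hx
  obtain ⟨b, rfl⟩ := hy
  exact ((MonoidHom.commute_inl_inr a b).map f).eq

theorem range_inl_sup_range_inr :
    (f.comp (MonoidHom.inl A B)).range ⊔ (f.comp (MonoidHom.inr A B)).range = f.range := by
  apply le_antisymm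
  · rw [MonoidHom.range_comp, MonoidHom.range_comp]
    exact sup_le (Subgroup.map_le_range f _) (Subgroup.map_le_range f _)
  · rintro _ ⟨⟨a, b⟩, rfl⟩
    rw [← Prod.fst_mul_snd (a, b), map_mul]
    exact Subgroup.mul_mem_sup ⟨a, rfl⟩ ⟨b, rfl⟩

variable {f}

theorem range_inl_inf_range_inr (hf : Function.Injective f) :
    (f.comp (MonoidHom.inl A B)).range ⊓ (f.comp (MonoidHom.inr A B)).range = ⊥ := by
  rw [Subgroup.eq_bot_iff_forall]
  rintro _ ⟨⟨a, rfl⟩, ⟨b, hb⟩⟩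
  obtain ⟨rfl, -⟩ : 1 = a ∧ b = 1 := Prod.ext_iff.1 (hf hb)
  exact map_one _

end InternalProduct

section RootsOfUnity

variable {R : Type*} [CommRing R] {k : ℕ}

theorem closure_toRootsOfUnity_eq_top [IsDomain R] [NeZero k] {ζ : R} (hζ : IsPrimitiveRoot ζ k) :
    Subgroup.closure {hζ.toRootsOfUnity} = ⊤ := by
  refine (Subgroup.eq_top_iff' _).2 fun x ↦ ?_
  obtain ⟨i, -, hi⟩ := hζ.eq_pow_of_pow_eq_one ((mem_rootsOfUnity' k x.1).1 x.2)
  have x_eq : hζ.toRootsOfUnity ^ i = x := by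
    ext
    exact hi
  rw [← x_eq]
  exact pow_mem (Subgroup.subset_closure (Set.mem_singleton _)) i

/-- The group of `m`-th roots of unity in `ℂ` is cyclic of order `m`. -/
def complexRootsOfUnityMulEquiv (m : ℕ) [NeZero m] :
    rootsOfUnity m ℂ ≃* Multiplicative (ZMod m) :=
  mulEquivOfCyclicCardEq <| by
    rw [Complex.card_rootsOfUnity, Nat.card_congr Multiplicative.toAdd,
      Nat.card_zmod]

variable {G n : Type*} [Group G] [Fintype n] [DecidableEq n]

/-- The representation `(g, u) ↦ u • ρ g` of `G × μₖ` obtained from a representation `ρ` of `G`. -/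
def scalarTwist (ρ : G →* Matrix n n R) (k : ℕ) : G × rootsOfUnity k R →* Matrix n n R where
  toFun x := ((x.2 : Rˣ) : R) • ρ x.1
  map_one' := by simp
  map_mul' x y := by
    simp only [Prod.snd_mul, Prod.fst_mul, map_mul, Subgroup.coe_mul, Units.val_mul,
      smul_mul_smul_comm]

theorem scalarTwist_injective {ρ : G →* Matrix n n R} (hρ : Function.Injective ρ)
    (hdet : ∀ g, (ρ g).det = 1) (hk : (Fintype.card n).Coprime k) :
    Function.Injective (scalarTwist ρ k) := by
  refine (injective_iff_map_eq_one _).2 fun ⟨g, u⟩ h ↦ ?_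
  have smul_eq_one : ((u : Rˣ) : R) • ρ g = 1 := h
  have pow_card_eq_one : u ^ Fintype.card n = 1 := by
    have det_eq_one := congrArg Matrix.det smul_eq_one
    rw [Matrix.det_smul, hdet, mul_one, Matrix.det_one] at det_eq_one
    exact Subtype.ext (Units.ext (by simpa using det_eq_one))
  have pow_eq_one : u ^ k = 1 := Subtype.ext u.2
  have u_eq_one : u = 1 := by
    simpa [hk.gcd_eq_one] using pow_gcd_eq_one.2 ⟨pow_card_eq_one, pow_eq_one⟩
  have g_eq_one : ρ g = ρ 1 := by simpa [u_eq_one] using smul_eq_one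
  rw [hρ g_eq_one, u_eq_one, Prod.mk_one_one]

end RootsOfUnity

section SpecialLinear

section CommRing

variable {R : Type*} [CommRing R]

/-- The Weyl element of `SL₂(R)`. -/
def weyl (R : Type*) [CommRing R] : SL(2, R) :=
  ⟨!![0, -1; 1, 0], by simp⟩

/-- The upper unitriangular element `!![1, b; 0, 1]` of `SL₂(R)`. -/
def upperUnipotent (b : R) : SL(2, R) :=
  ⟨!![1, b; 0, 1], by simp⟩

/-- The diagonal element `!![u, 0; 0, u⁻¹]` of `SL₂(R)`. -/
def torus (u : Rˣ) : SL(2, R) :=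
  ⟨!![(u : R), 0; 0, (u⁻¹ : Rˣ)], by simp⟩

theorem coe_weyl : (weyl R : Matrix (Fin 2) (Fin 2) R) = !![0, -1; 1, 0] :=
  rfl

theorem coe_upperUnipotent (b : R) :
    (upperUnipotent b : Matrix (Fin 2) (Fin 2) R) = !![1, b; 0, 1] :=
  rfl

theorem coe_torus (u : Rˣ) :
    (torus u : Matrix (Fin 2) (Fin 2) R) = !![(u : R), 0; 0, (u⁻¹ : Rˣ)] :=
  rfl

theorem torus_neg_one : torus (-1 : Rˣ) = -1 := by
  ext i j
  fin_cases i <;> fin_cases j <;> simp [coe_torus]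

theorem upperUnipotent_eq_transvection (b : R) :
    upperUnipotent b = SpecialLinearGroup.transvection zero_ne_one b := by
  ext i j
  fin_cases i <;> fin_cases j <;> simp [coe_upperUnipotent, SpecialLinearGroup.transvection_coe]

theorem weyl_mul_upperUnipotent_mul_inv (b : R) :
    weyl R * upperUnipotent (-b) * (weyl R)⁻¹ =
      SpecialLinearGroup.transvection one_ne_zero b := by
  rw [mul_inv_eq_iff_eq_mul]
  ext i j
  fin_cases i <;> fin_cases j <;>
    simp [coe_weyl, coe_upperUnipotent, SpecialLinearGroup.transvection_coe, add_mul]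

theorem weyl_mul_apply_zero (g : SL(2, R)) (j : Fin 2) : (weyl R * g) 0 j = -g 1 j := by
  simp [coe_weyl, Matrix.mul_apply]

theorem weyl_mul_apply_one (g : SL(2, R)) (j : Fin 2) : (weyl R * g) 1 j = g 0 j := by
  simp [coe_weyl, Matrix.mul_apply]

theorem upperUnipotent_mul_apply_zero (b : R) (g : SL(2, R)) (j : Fin 2) :
    (upperUnipotent b * g) 0 j = g 0 j + b * g 1 j := by
  simp [coe_upperUnipotent, Matrix.mul_apply]

theorem upperUnipotent_mul_apply_one (b : R) (g : SL(2, R)) (j : Fin 2) :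
    (upperUnipotent b * g) 1 j = g 1 j := by
  simp [coe_upperUnipotent, Matrix.mul_apply]

theorem det_fin_two_eq_one (g : SL(2, R)) : g 0 0 * g 1 1 - g 0 1 * g 1 0 = 1 := by
  rw [← Matrix.det_fin_two, g.det_coe]

theorem upperUnipotent_one_pow (n : ℕ) :
    upperUnipotent (1 : R) ^ n = upperUnipotent (n : R) := by
  simp only [upperUnipotent_eq_transvection]
  induction n with
  | zero => simp
  | succ n ih => rw [pow_succ, ih, Nat.cast_succ, SpecialLinearGroup.transvection_add]

theorem weyl_mul_upperUnipotent_one_pow_six : (weyl R * upperUnipotent 1) ^ 6 = 1 := by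
  have pow_three : (weyl R * upperUnipotent 1) ^ 3 = -1 := by
    ext i j
    fin_cases i <;> fin_cases j <;>
      simp [coe_weyl, coe_upperUnipotent, pow_succ]
  rw [show 6 = 3 * 2 from rfl, pow_mul, pow_three, neg_one_sq]

end CommRing

variable {F : Type*} [Field F]

theorem closure_weyl_upperUnipotent_eq_top :
    Subgroup.closure (insert (weyl F) (Set.range upperUnipotent)) = ⊤ := by
  set H := Subgroup.closure (insert (weyl F) (Set.range upperUnipotent))
  have weyl_mem : weyl F ∈ H := Subgroup.subset_closure (Set.mem_insert _ _)
  have upper_mem (b : F) : upperUnipotent b ∈ H :=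
    Subgroup.subset_closure (Set.mem_insert_of_mem _ ⟨b, rfl⟩)
  refine (Subgroup.eq_top_iff' H).2 fun g ↦
    SL2.transvection_induction (· ∈ H)
    (fun i j hij c ↦ ?_) (fun _ _ ↦ mul_mem) g
  fin_cases i <;> fin_cases j
  · exact absurd rfl hij
  · exact upperUnipotent_eq_transvection c ▸ upper_mem c
  · exact weyl_mul_upperUnipotent_mul_inv c ▸
      mul_mem (mul_mem weyl_mem (upper_mem _)) (inv_mem weyl_mem)
  · exact absurd rfl hij

theorem closure_weyl_upperUnipotent_one_eq_top (p : ℕ) [Fact p.Prime] :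
    Subgroup.closure {weyl (ZMod p), upperUnipotent 1} = ⊤ := by
  rw [← top_le_iff, ← closure_weyl_upperUnipotent_eq_top, Subgroup.closure_le,
    Set.insert_subset_iff]
  refine ⟨Subgroup.subset_closure (by simp), ?_⟩
  rintro _ ⟨b, rfl⟩
  rw [← ZMod.natCast_zmod_val b, ← upperUnipotent_one_pow]
  exact pow_mem (Subgroup.subset_closure (by simp)) _

theorem closure_weyl_one_upperUnipotent_one_prod_eq_top (p : ℕ) [Fact p.Prime] {H : Type*}
    [Group H] {z : H} (hz : Subgroup.closure {z} = ⊤) (hz' : z ^ 5 = 1) :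
    Subgroup.closure {(weyl (ZMod p), 1), (upperUnipotent 1, z)} = ⊤ := by
  set N := Subgroup.closure {(weyl (ZMod p), (1 : H)), (upperUnipotent 1, z)}
  have weyl_mem : (weyl (ZMod p), 1) ∈ N := Subgroup.subset_closure (by simp)
  have upper_mem : (upperUnipotent 1, z) ∈ N := Subgroup.subset_closure (by simp)
  have z_mem : (1, z) ∈ N := by
    have pow_six : ((weyl (ZMod p), 1) * (upperUnipotent 1, z)) ^ 6 = (1, z) := by
      rw [Prod.mk_mul_mk, Prod.pow_mk, weyl_mul_upperUnipotent_one_pow_six, one_mul, pow_succ,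
        hz', one_mul]
    exact pow_six ▸ pow_mem (mul_mem weyl_mem upper_mem) 6
  have upper_one_mem : (upperUnipotent 1, 1) ∈ N := by
    simpa using mul_mem upper_mem (inv_mem z_mem)
  rw [← top_le_iff,
    ← closure_inl_union_inr_eq_top (closure_weyl_upperUnipotent_one_eq_top p) hz,
    Subgroup.closure_le]
  rintro _ (⟨_, rfl | rfl, rfl⟩ | ⟨_, rfl, rfl⟩)
  exacts [weyl_mem, upper_one_mem, z_mem]

theorem eq_bot_of_neg_one_notMem {a : F} (ha : a ≠ 0) (ha' : a ^ 2 ≠ 1)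
    {N : Subgroup SL(2, F)} [N.Normal] (hN : -1 ∉ N) : N = ⊥ := by
  have : IsSimpleGroup PSL(2, F) :=
    ProjectiveSpecialLinearGroup.rank_two_simple' ⟨a, ha, ha'⟩
  let π : SL(2, F) →* PSL(2, F) := QuotientGroup.mk' (Subgroup.center SL(2, F))
  have ker_π : π.ker = Subgroup.center SL(2, F) := QuotientGroup.ker_mk' _
  have : (N.map π).Normal := Subgroup.Normal.map ‹_› π (QuotientGroup.mk'_surjective _)
  obtain map_eq_bot | map_eq_top := this.eq_bot_or_eq_top
  · rw [Subgroup.map_eq_bot_iff, ker_π] at map_eq_bot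
    refine (Subgroup.eq_bot_iff_forall N).2 fun g hg ↦ ?_
    obtain ⟨r, hr, hrg⟩ := Matrix.SpecialLinearGroup.mem_center_iff.1 (map_eq_bot hg)
    obtain rfl | rfl : r = 1 ∨ r = -1 := by simpa using hr
    · exact Subtype.ext (by simpa using hrg.symm)
    · rw [map_neg, map_one] at hrg
      exact absurd (by rwa [← show g = -1 from Subtype.ext hrg.symm]) hN
  · have sup_eq_top : N ⊔ Subgroup.center SL(2, F) = ⊤ := by
      rw [← ker_π, ← Subgroup.comap_map_eq, map_eq_top, Subgroup.comap_top]
    have commutator_le : commutator SL(2, F) ≤ N :=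
      Subgroup.Normal.commutator_le_of_self_sup_commutative_eq_top sup_eq_top inferInstance
    rw [SL2.commutator_eq_top ha ha'] at commutator_le
    exact absurd (commutator_le (Subgroup.mem_top _)) hN

theorem card_specialLinearGroup (n : ℕ) [NeZero n] [Fintype F] :
    Nat.card (Matrix.SpecialLinearGroup (Fin n) F) * (Fintype.card F - 1) =
      ∏ i : Fin n, (Fintype.card F ^ n - Fintype.card F ^ (i : ℕ)) := by
  let det : GL (Fin n) F →* Fˣ := Matrix.GeneralLinearGroup.det
  have card_ker : Nat.card det.ker = Nat.card (Matrix.SpecialLinearGroup (Fin n) F) := by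
    rw [← Nat.card_range_of_injective Matrix.SpecialLinearGroup.toGL_injective,
      Matrix.SpecialLinearGroup.range_toGL]
    rfl
  have index_ker : det.ker.index = Fintype.card F - 1 := by
    rw [Subgroup.index_ker,
      det.range_eq_top_of_surjective Matrix.GeneralLinearGroup.det_surjective]
    simp [Nat.card_units, Nat.card_eq_fintype_card]
  rw [← Matrix.card_GL_field, ← det.ker.card_mul_index, card_ker, index_ker]

end SpecialLinear

section GaussSum

variable {F K : Type*} [Field F] [Fintype F] [DecidableEq F] [Field K]

/-- The quadratic character of `F` with values in `K`. -/
def quadraticMulChar (F K : Type*) [Field F] [Fintype F] [DecidableEq F] [Field K] : MulChar F K :=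
  (quadraticChar F).ringHomComp (Int.castRingHom K)

theorem quadraticMulChar_apply (a : F) : quadraticMulChar F K a = (quadraticChar F a : K) :=
  rfl

theorem quadraticMulChar_isQuadratic : (quadraticMulChar F K).IsQuadratic :=
  (quadraticChar_isQuadratic F).comp _

theorem quadraticMulChar_mul_self {a : F} (ha : a ≠ 0) :
    quadraticMulChar F K a * quadraticMulChar F K a = 1 := by
  rw [← sq, quadraticMulChar_apply]
  exact_mod_cast congrArg (Int.cast (R := K)) (quadraticChar_sq_one ha)

theorem ringChar_ne_two [NeZero (2 : K)] : ringChar K ≠ 2 := fun h ↦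
  two_ne_zero (α := K) (by exact_mod_cast h ▸ ringChar.Nat.cast_ringChar (R := K))

variable [NeZero (2 : F)]

theorem quadraticMulChar_ne_one [NeZero (2 : K)] : quadraticMulChar F K ≠ 1 := by
  obtain ⟨a, ha⟩ := quadraticChar_exists_neg_one' (F := F) ringChar_ne_two
  refine MulChar.ne_one_iff.2 ⟨a, ?_⟩
  simpa [quadraticMulChar_apply, ha] using Ring.neg_one_ne_one_of_char_ne_two ringChar_ne_two

theorem sum_comp_sq (f : F → K) : ∑ x, f (x ^ 2) = ∑ t, (quadraticMulChar F K t + 1) * f t := by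
  have card_sqrts (t : F) : (({x | x ^ 2 = t} : Finset F).card : K) =
      quadraticMulChar F K t + 1 := by
    simpa [quadraticMulChar_apply] using
      congrArg (Int.cast (R := K)) (quadraticChar_card_sqrts (F := F) ringChar_ne_two t)
  rw [← Finset.sum_fiberwise Finset.univ (fun x : F ↦ x ^ 2)]
  refine Finset.sum_congr rfl fun t _ ↦ ?_
  rw [← card_sqrts, ← nsmul_eq_mul, ← Finset.sum_const]
  exact Finset.sum_congr rfl fun x hx ↦ by rw [(Finset.mem_filter.1 hx).2]

theorem sum_addChar_mul_sq {ψ : AddChar F K} (hψ : ψ ≠ 1) {a : F} (ha : a ≠ 0) :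
    ∑ x, ψ (a * x ^ 2) = quadraticMulChar F K a * gaussSum (quadraticMulChar F K) ψ := by
  have sum_eq_zero : ∑ t, ψ (a * t) = 0 :=
    (Equiv.sum_comp (Equiv.mulLeft₀ a ha) ψ).trans (AddChar.sum_eq_zero_of_ne_one hψ)
  have mulShift := gaussSum_mulShift (quadraticMulChar F K) ψ (Units.mk0 a ha)
  rw [Units.val_mk0] at mulShift
  calc ∑ x, ψ (a * x ^ 2)
    _ = ∑ t, (quadraticMulChar F K t + 1) * ψ (a * t) := sum_comp_sq fun t ↦ ψ (a * t)
    _ = gaussSum (quadraticMulChar F K) (ψ.mulShift a) := by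
      simp only [add_mul, one_mul, Finset.sum_add_distrib, sum_eq_zero, add_zero]
      rfl
    _ = _ := by
      rw [← mulShift, ← mul_assoc, quadraticMulChar_mul_self ha, one_mul]

theorem sum_addChar_quadratic {ψ : AddChar F K} (hψ : ψ ≠ 1) {a : F} (ha : a ≠ 0) (b : F) :
    ∑ x, ψ (a * x ^ 2 + b * x) =
      quadraticMulChar F K a * gaussSum (quadraticMulChar F K) ψ * ψ (-b ^ 2 / (4 * a)) := by
  rw [← sum_addChar_mul_sq hψ ha, Finset.sum_mul,
    ← Equiv.sum_comp (Equiv.addRight (b / (2 * a))) fun x ↦ ψ (a * x ^ 2) * _]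
  refine Finset.sum_congr rfl fun x _ ↦ ?_
  rw [← AddChar.map_add_eq_mul]
  congr 1
  have two_ne_zero' : (2 : F) ≠ 0 := two_ne_zero
  simp only [Equiv.coe_addRight, show (4 : F) = 2 * 2 by norm_num]
  field_simp
  ring

end GaussSum

section Weil

variable {F K : Type*} [Field F] [Fintype F] [DecidableEq F] [Field K]

/-- The matrix of `g` in the Weil representation of `SL₂(F)` on functions on `F`, with respect to
the additive character `ψ`. Writing `g = !![a, b; c, d]`, it is monomial when `c = 0` and the
kernel of a Fourier transform twisted by quadratic phases otherwise. -/
def weilMatrix (ψ : AddChar F K) (g : SL(2, F)) : Matrix F F K :=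
  Matrix.of fun x y ↦
    if g 1 0 = 0 then
      if y = g 0 0 * x then quadraticMulChar F K (g 0 0) * ψ (g 0 0 * g 0 1 * x ^ 2 / 2) else 0
    else
      quadraticMulChar F K (2 * g 1 0) / gaussSum (quadraticMulChar F K) ψ *
        ψ ((g 0 0 * x ^ 2 - 2 * x * y + g 1 1 * y ^ 2) / (2 * g 1 0))

theorem weilMatrix_neg_neg (ψ : AddChar F K) (g : SL(2, F)) (x y : F) :
    weilMatrix ψ g (-x) (-y) = weilMatrix ψ g x y := by
  simp [weilMatrix]

theorem weilMatrix_apply_of_eq_zero (ψ : AddChar F K) {g : SL(2, F)} (hg : g 1 0 = 0) (x y : F) :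
    weilMatrix ψ g x y =
      if y = g 0 0 * x then quadraticMulChar F K (g 0 0) * ψ (g 0 0 * g 0 1 * x ^ 2 / 2) else 0 :=
  if_pos hg

theorem weilMatrix_apply_of_ne_zero (ψ : AddChar F K) {g : SL(2, F)} (hg : g 1 0 ≠ 0) (x y : F) :
    weilMatrix ψ g x y = quadraticMulChar F K (2 * g 1 0) / gaussSum (quadraticMulChar F K) ψ *
      ψ ((g 0 0 * x ^ 2 - 2 * x * y + g 1 1 * y ^ 2) / (2 * g 1 0)) :=
  if_neg hg

theorem weilMatrix_one (ψ : AddChar F K) : weilMatrix ψ 1 = 1 := by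
  ext x y
  simp [weilMatrix, Matrix.one_apply, eq_comm]

theorem weilMatrix_upperUnipotent (ψ : AddChar F K) (b : F) :
    weilMatrix ψ (upperUnipotent b) = Matrix.diagonal fun x ↦ ψ (b * x ^ 2 / 2) := by
  ext x y
  simp [weilMatrix, coe_upperUnipotent, Matrix.diagonal_apply, eq_comm]

theorem weilMatrix_torus_apply (ψ : AddChar F K) (u : Fˣ) (x y : F) :
    weilMatrix ψ (torus u) x y = if y = u * x then quadraticMulChar F K u else 0 := by
  simp [weilMatrix, coe_torus]

variable [NeZero (2 : F)]

theorem weilMatrix_upperUnipotent_mul (ψ : AddChar F K) (b : F) (g : SL(2, F)) :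
    weilMatrix ψ (upperUnipotent b * g) = weilMatrix ψ (upperUnipotent b) * weilMatrix ψ g := by
  ext x y
  have det_eq := det_fin_two_eq_one g
  have two_ne_zero' : (2 : F) ≠ 0 := two_ne_zero
  rw [weilMatrix_upperUnipotent, Matrix.diagonal_mul]
  by_cases hc : g 1 0 = 0
  · rw [weilMatrix_apply_of_eq_zero ψ hc,
      weilMatrix_apply_of_eq_zero ψ ((upperUnipotent_mul_apply_one b g 0).trans hc)]
    simp only [upperUnipotent_mul_apply_zero, hc, mul_zero, add_zero, mul_ite]
    rw [mul_left_comm, ← AddChar.map_add_eq_mul]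
    congr 4
    grind
  · rw [weilMatrix_apply_of_ne_zero ψ hc,
      weilMatrix_apply_of_ne_zero ψ ((upperUnipotent_mul_apply_one b g 0).trans_ne hc)]
    simp only [upperUnipotent_mul_apply_zero, upperUnipotent_mul_apply_one]
    rw [mul_left_comm, ← AddChar.map_add_eq_mul]
    congr 2
    field_simp
    ring

theorem weilMatrix_weyl_apply (ψ : AddChar F K) (x y : F) :
    weilMatrix ψ (weyl F) x y =
      quadraticMulChar F K 2 / gaussSum (quadraticMulChar F K) ψ * ψ (-(x * y)) := by
  have two_ne_zero' : (2 : F) ≠ 0 := two_ne_zero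
  have phase_eq : -(2 * x * y) / 2 = -(x * y) := by field_simp
  rw [weilMatrix_apply_of_ne_zero ψ (by simp [coe_weyl])]
  simp [coe_weyl, phase_eq]

theorem weilMatrix_weyl_mul_of_apply_one_zero_eq_zero (ψ : AddChar F K) {g : SL(2, F)}
    (hc : g 1 0 = 0) :
    weilMatrix ψ (weyl F * g) = weilMatrix ψ (weyl F) * weilMatrix ψ g := by
  ext x z
  have two_ne_zero' : (2 : F) ≠ 0 := two_ne_zero
  have det_eq := det_fin_two_eq_one g
  have ha : g 0 0 ≠ 0 := by rintro ha; simp [ha, hc] at det_eq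
  have eq_iff (y : F) : z = g 0 0 * y ↔ y = z / g 0 0 := by rw [eq_div_iff ha, mul_comm, eq_comm]
  rw [weilMatrix_apply_of_ne_zero ψ ((weyl_mul_apply_one g 0).trans_ne ha), Matrix.mul_apply]
  simp only [weilMatrix_weyl_apply, weilMatrix_apply_of_eq_zero ψ hc, weyl_mul_apply_zero,
    weyl_mul_apply_one, mul_ite, mul_zero, eq_iff, Finset.sum_ite_eq', Finset.mem_univ, if_true,
    hc, map_mul]
  rw [mul_mul_mul_comm, ← AddChar.map_add_eq_mul, mul_div_right_comm]
  congr 2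
  field_simp
  ring

theorem weilMatrix_weyl_mul_weilMatrix_apply (ψ : AddChar F K) {g : SL(2, F)} (hc : g 1 0 ≠ 0)
    (x z : F) :
    (weilMatrix ψ (weyl F) * weilMatrix ψ g) x z =
      quadraticMulChar F K (g 1 0) / gaussSum (quadraticMulChar F K) ψ ^ 2 *
        ψ (g 1 1 * z ^ 2 / (2 * g 1 0)) *
        ∑ y, ψ (g 0 0 / (2 * g 1 0) * y ^ 2 + -(x + z / g 1 0) * y) := by
  have two_ne_zero' : (2 : F) ≠ 0 := two_ne_zero
  have phase_eq (y : F) :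
      ψ (-(x * y)) * ψ ((g 0 0 * y ^ 2 - 2 * y * z + g 1 1 * z ^ 2) / (2 * g 1 0)) =
        ψ (g 1 1 * z ^ 2 / (2 * g 1 0)) *
          ψ (g 0 0 / (2 * g 1 0) * y ^ 2 + -(x + z / g 1 0) * y) := by
    rw [← AddChar.map_add_eq_mul, ← AddChar.map_add_eq_mul]
    congr 1
    field_simp
    ring
  rw [Matrix.mul_apply, Finset.mul_sum]
  refine Finset.sum_congr rfl fun y _ ↦ ?_
  rw [weilMatrix_weyl_apply, weilMatrix_apply_of_ne_zero ψ hc, mul_mul_mul_comm, phase_eq,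
    div_mul_div_comm, map_mul, ← mul_assoc (quadraticMulChar F K 2),
    quadraticMulChar_mul_self two_ne_zero', one_mul, ← sq, mul_assoc]

variable [NeZero (2 : K)] [NeZero (Fintype.card F : K)] {ψ : AddChar F K}

theorem gaussSum_quadraticMulChar_ne_zero (hψ : ψ ≠ 1) :
    gaussSum (quadraticMulChar F K) ψ ≠ 0 :=
  gaussSum_ne_zero_of_nontrivial (NeZero.ne _) quadraticMulChar_ne_one
    (AddChar.IsPrimitive.of_ne_one hψ)

theorem quadraticMulChar_div_gaussSum_sq_mul_card (hψ : ψ ≠ 1) (c : F) :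
    quadraticMulChar F K c / gaussSum (quadraticMulChar F K) ψ ^ 2 * Fintype.card F =
      quadraticMulChar F K (-c) := by
  have gauss_ne_zero := gaussSum_quadraticMulChar_ne_zero hψ
  have gauss_sq : gaussSum (quadraticMulChar F K) ψ ^ 2 =
      quadraticMulChar F K (-1) * (Fintype.card F : K) :=
    gaussSum_sq quadraticMulChar_ne_one quadraticMulChar_isQuadratic
      (AddChar.IsPrimitive.of_ne_one hψ)
  rw [div_mul_eq_mul_div, div_eq_iff (pow_ne_zero 2 gauss_ne_zero), gauss_sq, ← neg_one_mul c,
    map_mul, mul_mul_mul_comm, quadraticMulChar_mul_self (neg_ne_zero.2 one_ne_zero), one_mul]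

theorem weilMatrix_weyl_mul_of_apply_zero_zero_eq_zero (hψ : ψ ≠ 1) {g : SL(2, F)}
    (ha : g 0 0 = 0) :
    weilMatrix ψ (weyl F * g) = weilMatrix ψ (weyl F) * weilMatrix ψ g := by
  ext x z
  have two_ne_zero' : (2 : F) ≠ 0 := two_ne_zero
  have hc : g 1 0 ≠ 0 := by
    intro hc
    simpa [ha, hc] using det_fin_two_eq_one g
  have eq_zero_iff : -(x + z / g 1 0) = 0 ↔ z = -g 1 0 * x := by
    rw [neg_eq_zero, add_eq_zero_iff_eq_neg', div_eq_iff hc, neg_mul, neg_mul, mul_comm]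
  have orthogonality : ∑ y, ψ (g 0 0 / (2 * g 1 0) * y ^ 2 + -(x + z / g 1 0) * y) =
      if z = -g 1 0 * x then (Fintype.card F : K) else 0 := by
    calc ∑ y, ψ (g 0 0 / (2 * g 1 0) * y ^ 2 + -(x + z / g 1 0) * y)
      _ = ∑ y, ψ (y * -(x + z / g 1 0)) := by
        refine Finset.sum_congr rfl fun y _ ↦ ?_
        rw [ha, zero_div, zero_mul, zero_add, mul_comm]
      _ = _ := by
        rw [AddChar.sum_mulShift _ (AddChar.IsPrimitive.of_ne_one hψ), Nat.cast_ite,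
          Nat.cast_zero, if_congr eq_zero_iff rfl rfl]
  have phase_eq : g 1 1 * (-g 1 0 * x) ^ 2 / (2 * g 1 0) = -g 1 0 * -g 1 1 * x ^ 2 / 2 := by
    field_simp
  rw [weilMatrix_weyl_mul_weilMatrix_apply ψ hc, orthogonality,
    weilMatrix_apply_of_eq_zero ψ ((weyl_mul_apply_one g 0).trans ha)]
  simp only [weyl_mul_apply_zero, mul_ite, mul_zero]
  split_ifs with hz
  · rw [hz, phase_eq, mul_right_comm (_ / _), quadraticMulChar_div_gaussSum_sq_mul_card hψ]
  · rfl

theorem weilMatrix_weyl_mul_of_ne_zero (hψ : ψ ≠ 1) {g : SL(2, F)}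
    (ha : g 0 0 ≠ 0) (hc : g 1 0 ≠ 0) :
    weilMatrix ψ (weyl F * g) = weilMatrix ψ (weyl F) * weilMatrix ψ g := by
  ext x z
  have two_ne_zero' : (2 : F) ≠ 0 := two_ne_zero
  have four_eq : (4 : F) = 2 * 2 := by norm_num
  have gauss_ne_zero := gaussSum_quadraticMulChar_ne_zero hψ
  have det_eq := det_fin_two_eq_one g
  have char_mul : quadraticMulChar F K (g 1 0) * quadraticMulChar F K (g 0 0 / (2 * g 1 0)) =
      quadraticMulChar F K (2 * g 0 0) := by
    have : 2 * g 0 0 = 2 * 2 * (g 1 0 * (g 0 0 / (2 * g 1 0))) := by field_simp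
    rw [this, map_mul, map_mul, map_mul, quadraticMulChar_mul_self two_ne_zero', one_mul]
  have phase_eq :
      g 1 1 * z ^ 2 / (2 * g 1 0) + -(-(x + z / g 1 0)) ^ 2 / (4 * (g 0 0 / (2 * g 1 0))) =
        (-g 1 0 * x ^ 2 - 2 * x * z + g 0 1 * z ^ 2) / (2 * g 0 0) := by
    rw [four_eq]
    field_simp
    grind
  rw [weilMatrix_weyl_mul_weilMatrix_apply ψ hc,
    sum_addChar_quadratic hψ (div_ne_zero ha (mul_ne_zero two_ne_zero' hc)),
    weilMatrix_apply_of_ne_zero ψ ((weyl_mul_apply_one g 0).trans_ne ha)]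
  simp only [weyl_mul_apply_zero, weyl_mul_apply_one]
  rw [mul_mul_mul_comm, ← AddChar.map_add_eq_mul, phase_eq, ← char_mul]
  field_simp

theorem weilMatrix_weyl_mul (hψ : ψ ≠ 1) (g : SL(2, F)) :
    weilMatrix ψ (weyl F * g) = weilMatrix ψ (weyl F) * weilMatrix ψ g := by
  by_cases hc : g 1 0 = 0
  · exact weilMatrix_weyl_mul_of_apply_one_zero_eq_zero ψ hc
  by_cases ha : g 0 0 = 0
  · exact weilMatrix_weyl_mul_of_apply_zero_zero_eq_zero hψ ha
  · exact weilMatrix_weyl_mul_of_ne_zero hψ ha hc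

theorem weilMatrix_mul (hψ : ψ ≠ 1) (g₁ g₂ : SL(2, F)) :
    weilMatrix ψ (g₁ * g₂) = weilMatrix ψ g₁ * weilMatrix ψ g₂ := by
  refine map_mul_of_closure_eq_top closure_weyl_upperUnipotent_eq_top (weilMatrix_one ψ) ?_ g₁ g₂
  rintro _ (rfl | ⟨b, rfl⟩) g
  · exact weilMatrix_weyl_mul hψ g
  · exact weilMatrix_upperUnipotent_mul ψ b g

end Weil

section OddPart

variable {A ι K : Type*} [AddCommGroup A]

/-- `h` lists exactly one element out of every pair `{x, -x}` of nonzero elements of `A`, and no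
nonzero element is its own negative. -/
def IsHalfSystem (h : ι → A) : Prop :=
  Function.Bijective fun o : Option (ι ⊕ ι) ↦ o.elim 0 (Sum.elim h (-h))

namespace IsHalfSystem

variable {h : ι → A}

theorem injective (hh : IsHalfSystem h) : Function.Injective h := fun i j hij ↦ by
  simpa using @hh.1 (some (.inl i)) (some (.inl j)) hij

theorem ne_neg (hh : IsHalfSystem h) (i j : ι) : h i ≠ -h j := fun hij ↦ by
  simpa using @hh.1 (some (.inl i)) (some (.inr j)) hij

theorem sum_eq [Fintype A] [Fintype ι] [AddCommMonoid K] (hh : IsHalfSystem h) (f : A → K) :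
    ∑ x, f x = f 0 + ∑ i, (f (h i) + f (-h i)) := by
  rw [← hh.sum_comp, Fintype.sum_option, Fintype.sum_sum_type, Finset.sum_add_distrib]
  rfl

end IsHalfSystem

variable [Ring K]

/-- The restriction to odd functions of the operator on `A → K` with kernel `M`, in the coordinates
given by a half system `h`. -/
def oddPart (h : ι → A) (M : Matrix A A K) : Matrix ι ι K :=
  Matrix.of fun i j ↦ M (h i) (h j) - M (h i) (-h j)

variable {h : ι → A}

theorem oddPart_diagonal [DecidableEq A] [DecidableEq ι] (hh : IsHalfSystem h) (d : A → K) :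
    oddPart h (Matrix.diagonal d) = Matrix.diagonal (d ∘ h) := by
  ext i j
  simp [oddPart, Matrix.diagonal_apply, hh.injective.eq_iff, hh.ne_neg]

theorem oddPart_one [DecidableEq A] [DecidableEq ι] (hh : IsHalfSystem h) :
    oddPart h (1 : Matrix A A K) = 1 :=
  oddPart_diagonal hh fun _ ↦ 1

theorem oddPart_mul [Fintype A] [Fintype ι] (hh : IsHalfSystem h) (M N : Matrix A A K)
    (hN : ∀ x y, N (-x) (-y) = N x y) : oddPart h (M * N) = oddPart h M * oddPart h N := by
  ext i j
  have zero_apply : N 0 (h j) - N 0 (-h j) = 0 := by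
    rw [← hN 0 (h j), neg_zero, sub_self]
  have neg_apply (x : A) : N (-x) (h j) - N (-x) (-h j) = -(N x (h j) - N x (-h j)) := by
    rw [neg_sub, hN, ← hN x (-h j), neg_neg]
  calc oddPart h (M * N) i j
    _ = ∑ x, M (h i) x * (N x (h j) - N x (-h j)) := by
      simp only [oddPart, Matrix.of_apply, Matrix.mul_apply, mul_sub, Finset.sum_sub_distrib]
    _ = ∑ k, (M (h i) (h k) - M (h i) (-h k)) * (N (h k) (h j) - N (h k) (-h j)) := by
      rw [hh.sum_eq, zero_apply, mul_zero, zero_add]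
      simp only [neg_apply, mul_neg, ← sub_eq_add_neg, ← sub_mul]

end OddPart

section OddWeil

variable {F K ι : Type*} [Field F] [Fintype F] [DecidableEq F] [NeZero (2 : F)] [Field K]
  [NeZero (2 : K)] [NeZero (Fintype.card F : K)] [Fintype ι] [DecidableEq ι]

/-- The odd part of the Weil representation of `SL₂(F)`, in the coordinates given by a half
system of `F`. -/
def oddWeilRep {ψ : AddChar F K} (hψ : ψ ≠ 1) {h : ι → F} (hh : IsHalfSystem h) :
    SL(2, F) →* Matrix ι ι K where
  toFun g := oddPart h (weilMatrix ψ g)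
  map_one' := by rw [weilMatrix_one, oddPart_one hh]
  map_mul' g₁ g₂ := by rw [weilMatrix_mul hψ, oddPart_mul hh _ _ (weilMatrix_neg_neg ψ g₂)]

end OddWeil

section Icosahedral

theorem zeta5_isPrimitiveRoot : IsPrimitiveRoot zeta5 5 := by
  simpa [zeta5] using Complex.isPrimitiveRoot_exp 5 (by norm_num)

theorem zeta5_pow_five : zeta5 ^ 5 = 1 :=
  zeta5_isPrimitiveRoot.pow_eq_one

theorem zeta5_geom_sum : 1 + zeta5 + zeta5 ^ 2 + zeta5 ^ 3 + zeta5 ^ 4 = 0 := by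
  simpa [Finset.sum_range_succ] using zeta5_isPrimitiveRoot.geom_sum_eq_zero (by norm_num)

theorem sqrt5_mul_self : sqrt5 * sqrt5 = 5 := by
  have := zeta5_geom_sum
  unfold sqrt5
  grind

theorem sqrt5_ne_zero : sqrt5 ≠ 0 := fun h ↦ by
  simpa [h] using sqrt5_mul_self

/-- The additive character `x ↦ ζ₅ ^ x` of `ℤ/5`. -/
def zeta5AddChar : AddChar (ZMod 5) ℂ :=
  AddChar.zmodChar 5 zeta5_pow_five

theorem zeta5AddChar_eq_pow {x : ZMod 5} {n : ℕ} (h : x = n) : zeta5AddChar x = zeta5 ^ n :=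
  h ▸ AddChar.zmodChar_apply' zeta5_pow_five n

theorem zeta5AddChar_ne_one : zeta5AddChar ≠ 1 := by
  refine AddChar.ne_one_iff.2 ⟨1, ?_⟩
  rw [zeta5AddChar_eq_pow Nat.cast_one.symm, pow_one]
  exact zeta5_isPrimitiveRoot.ne_one (by norm_num)

local instance : Fact (Nat.Prime 5) := ⟨by norm_num⟩

local instance : NeZero (2 : ZMod 5) := ⟨by decide⟩

local instance : NeZero (Fintype.card (ZMod 5) : ℂ) := ⟨by simp [ZMod.card]⟩

theorem gaussSum_zeta5AddChar : gaussSum (quadraticMulChar (ZMod 5) ℂ) zeta5AddChar = sqrt5 := by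
  have char_apply : ∀ x : Fin 5,
      quadraticChar (ZMod 5) (ZMod.finEquiv 5 x) = ![0, 1, -1, -1, 1] x := by
    decide
  have addChar_apply (x : Fin 5) : zeta5AddChar (ZMod.finEquiv 5 x) = zeta5 ^ (x : ℕ) :=
    zeta5AddChar_eq_pow (by decide +revert)
  rw [gaussSum, ← (ZMod.finEquiv 5).toEquiv.sum_comp]
  simp [-quadraticChar_apply, quadraticMulChar_apply, char_apply, addChar_apply,
    Fin.sum_univ_five, sqrt5]
  ring

/-- The half system `1, 3` of `ℤ/5`. It is ordered so that the Weil representation below is the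
one generated by `σ` and `diag(ζ₅³, ζ₅²)`. -/
def half5 : Fin 2 → ZMod 5 :=
  ![1, 3]

theorem isHalfSystem_half5 : IsHalfSystem half5 := by
  rw [IsHalfSystem, Fintype.bijective_iff_injective_and_card]
  exact ⟨by decide, by decide⟩

/-- The representation of `SL₂(𝔽₅)` on the odd functions on `𝔽₅`, in the coordinates given by
the values at `1` and `3`. -/
def icosahedralRep : SL25 →* Matrix (Fin 2) (Fin 2) ℂ :=
  oddWeilRep zeta5AddChar_ne_one isHalfSystem_half5

theorem icosahedralRep_apply (g : SL25) (i j : Fin 2) :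
    icosahedralRep g i j = weilMatrix zeta5AddChar g (half5 i) (half5 j) -
      weilMatrix zeta5AddChar g (half5 i) (-half5 j) :=
  rfl

theorem icosahedralRep_weyl : icosahedralRep (weyl (ZMod 5)) =
    !![(zeta5 - zeta5 ^ 4) / sqrt5, (zeta5 ^ 3 - zeta5 ^ 2) / sqrt5;
      (zeta5 ^ 3 - zeta5 ^ 2) / sqrt5, -((zeta5 - zeta5 ^ 4) / sqrt5)] := by
  have char_two : quadraticMulChar (ZMod 5) ℂ 2 = -1 := by
    rw [quadraticMulChar_apply, show quadraticChar (ZMod 5) 2 = -1 by decide, Int.cast_neg,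
      Int.cast_one]
  have pos_apply (i j : Fin 2) :
      zeta5AddChar (-(half5 i * half5 j)) = zeta5 ^ !![4, 2; 2, 1] i j :=
    zeta5AddChar_eq_pow (by revert i j; decide)
  have neg_apply (i j : Fin 2) :
      zeta5AddChar (-(half5 i * -half5 j)) = zeta5 ^ !![1, 3; 3, 4] i j :=
    zeta5AddChar_eq_pow (by revert i j; decide)
  ext i j
  rw [icosahedralRep_apply, weilMatrix_weyl_apply, weilMatrix_weyl_apply, pos_apply, neg_apply,
    char_two, gaussSum_zeta5AddChar]
  fin_cases i <;> fin_cases j <;> simp <;> ring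

theorem icosahedralRep_upperUnipotent_one :
    icosahedralRep (upperUnipotent 1) = Matrix.diagonal ![zeta5 ^ 3, zeta5 ^ 2] := by
  have half_sq_apply (i : Fin 2) : zeta5AddChar (1 * half5 i ^ 2 / 2) = zeta5 ^ ![3, 2] i :=
    zeta5AddChar_eq_pow (by revert i; decide +kernel)
  calc icosahedralRep (upperUnipotent 1)
    _ = oddPart half5 (Matrix.diagonal fun x ↦ zeta5AddChar (1 * x ^ 2 / 2)) :=
      congrArg (oddPart half5) (weilMatrix_upperUnipotent zeta5AddChar 1)
    _ = Matrix.diagonal fun i ↦ zeta5 ^ ![3, 2] i := by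
      rw [oddPart_diagonal isHalfSystem_half5]
      exact congrArg Matrix.diagonal (funext half_sq_apply)
    _ = _ := by
      congr 1
      ext i
      fin_cases i <;> rfl

theorem icosahedralRep_torus {u : (ZMod 5)ˣ} {e : Fin 2 → Fin 2 → ℤ}
    (he : ∀ i j, (if half5 j = u * half5 i then quadraticChar (ZMod 5) u else 0) -
      (if -half5 j = u * half5 i then quadraticChar (ZMod 5) u else 0) = e i j) :
    icosahedralRep (torus u) = Matrix.of fun i j ↦ (e i j : ℂ) := by
  ext i j
  rw [icosahedralRep_apply, weilMatrix_torus_apply, weilMatrix_torus_apply,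
    quadraticMulChar_apply, Matrix.of_apply, ← he, Int.cast_sub, Int.cast_ite, Int.cast_ite,
    Int.cast_zero]

theorem icosahedralRep_torus_two :
    icosahedralRep (torus (Units.mk0 2 two_ne_zero)) = beta := by
  rw [icosahedralRep_torus (e := ![![0, 1], ![-1, 0]]) (by decide)]
  ext i j
  fin_cases i <;> fin_cases j <;> simp [beta]

theorem icosahedralRep_neg_one : icosahedralRep (-1) = -1 := by
  rw [← torus_neg_one, icosahedralRep_torus (e := ![![-1, 0], ![0, -1]]) (by decide)]
  ext i j
  fin_cases i <;> fin_cases j <;> simp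

theorem icosahedralRep_injective : Function.Injective icosahedralRep := by
  have neg_one_notMem : -1 ∉ icosahedralRep.ker := fun h ↦ by
    have neg_one_eq_one := icosahedralRep_neg_one.symm.trans h
    norm_num [← Matrix.ext_iff, Fin.forall_fin_two] at neg_one_eq_one
  rw [← MonoidHom.ker_eq_bot_iff]
  exact eq_bot_of_neg_one_notMem (a := 2) (by decide) (by decide) neg_one_notMem

theorem det_icosahedralRep (g : SL25) : (icosahedralRep g).det = 1 :=
  map_eq_one_of_commutator_eq_top
    (SL2.commutator_eq_top (a := (2 : ZMod 5)) (by decide) (by decide))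
    (Matrix.detMonoidHom.comp icosahedralRep) g

section BlockDiagonal

/-- The block-diagonal embedding of `GL₂ × GL₁` into `GL₃`, on the level of matrices; with `v = 1`
it is `emb`. -/
def blockDiag3 : Matrix (Fin 2) (Fin 2) ℂ × ℂ →* Matrix (Fin 3) (Fin 3) ℂ where
  toFun x := !![x.1 0 0, x.1 0 1, 0; x.1 1 0, x.1 1 1, 0; 0, 0, x.2]
  map_one' := by
    ext i j
    fin_cases i <;> fin_cases j <;> rfl
  map_mul' x y := by
    ext i j
    fin_cases i <;> fin_cases j <;> simp [Matrix.mul_apply, Fin.sum_univ_succ]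

theorem blockDiag3_injective : Function.Injective blockDiag3 := by
  rintro ⟨A, v⟩ ⟨B, w⟩ h
  have entry (i j : Fin 3) : blockDiag3 (A, v) i j = blockDiag3 (B, w) i j := by rw [h]
  refine Prod.ext (Matrix.ext fun i j ↦ ?_) (entry 2 2)
  fin_cases i <;> fin_cases j
  exacts [entry 0 0, entry 0 1, entry 1 0, entry 1 1]

theorem blockDiag3_diagonal (a b v : ℂ) :
    blockDiag3 (Matrix.diagonal ![a, b], v) = Matrix.diagonal ![a, b, v] := by
  ext i j
  fin_cases i <;> fin_cases j <;> rfl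

/-- The homomorphism `((g, u), v) ↦ diag(u • ρ g, v)`, where `ρ` is `icosahedralRep`. It identifies
`SL₂(𝔽₅) × μ₅ × μ₃₀` with `⟨σ, τ, λ₃₀⟩`. -/
def blockRep : (SL25 × rootsOfUnity 5 ℂ) × rootsOfUnity 30 ℂ →* GL (Fin 3) ℂ :=
  (blockDiag3.comp ((scalarTwist icosahedralRep 5).prodMap
    ((Units.coeHom ℂ).comp (rootsOfUnity 30 ℂ).subtype))).toHomUnits

theorem coe_blockRep (g : SL25) (u : rootsOfUnity 5 ℂ) (v : rootsOfUnity 30 ℂ) :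
    (blockRep ((g, u), v) : Matrix (Fin 3) (Fin 3) ℂ) =
      blockDiag3 (((u : ℂˣ) : ℂ) • icosahedralRep g, ((v : ℂˣ) : ℂ)) :=
  rfl

theorem blockRep_injective : Function.Injective blockRep := by
  refine Function.Injective.of_comp (f := Units.val) (blockDiag3_injective.comp ?_)
  exact (scalarTwist_injective icosahedralRep_injective det_icosahedralRep
    (by norm_num)).prodMap (Units.val_injective.comp Subtype.val_injective)

end BlockDiagonal

section Generators

theorem gen3_image_eq_range {G : Type*} [Group G] (f : G →* GL (Fin 3) ℂ) {s : Set G}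
    (hs : Subgroup.closure s = ⊤) :
    gen3 ((fun g ↦ (f g : Matrix (Fin 3) (Fin 3) ℂ)) '' s) = f.range := by
  have generators_eq : {x : GL (Fin 3) ℂ |
      (x : Matrix (Fin 3) (Fin 3) ℂ) ∈ (fun g ↦ (f g : Matrix (Fin 3) (Fin 3) ℂ)) '' s} =
      f '' s := by
    ext x
    simp only [Set.mem_ofPred_eq, Set.mem_image, Units.ext_iff]
  rw [gen3, generators_eq, ← MonoidHom.map_closure, hs, MonoidHom.range_eq_map]

theorem lambda30_root_isPrimitiveRoot :
    IsPrimitiveRoot (Complex.exp (2 * Real.pi * Complex.I / 30)) 30 := by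
  simpa using Complex.isPrimitiveRoot_exp 30 (by norm_num)

theorem gamma_mul_beta : gamma * beta = icosahedralRep (weyl (ZMod 5)) := by
  have geom_sum := zeta5_geom_sum
  have zeta_ne_zero : zeta5 ≠ 0 := zeta5_isPrimitiveRoot.ne_zero (by norm_num)
  have sub_ne_zero : zeta5 ^ 2 - zeta5 ^ 3 ≠ 0 := fun h ↦ by
    have zeta_sq_eq : zeta5 ^ 2 = zeta5 ^ 3 := sub_eq_zero.1 h
    exact absurd (zeta5_isPrimitiveRoot.pow_inj (by norm_num) (by norm_num) zeta_sq_eq)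
      (by norm_num)
  have sqrt_ne_zero := sqrt5_ne_zero
  have sqrt_eq : sqrt5 = zeta5 - zeta5 ^ 2 - zeta5 ^ 3 + zeta5 ^ 4 := rfl
  have inv_eq : zeta5⁻¹ = zeta5 ^ 4 := by grind
  rw [icosahedralRep_weyl]
  ext i j
  fin_cases i <;> fin_cases j <;> simp [gamma, beta, inv_eq]
  all_goals
    field_simp
    grind

theorem closure_S21_generators_eq_top :
    Subgroup.closure {-upperUnipotent 1, torus (Units.mk0 2 two_ne_zero),
      weyl (ZMod 5) * (torus (Units.mk0 2 two_ne_zero))⁻¹} = ⊤ := by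
  set m : SL25 := torus (Units.mk0 2 two_ne_zero)
  set N := Subgroup.closure {-upperUnipotent 1, m, weyl (ZMod 5) * m⁻¹}
  have neg_upper_mem : -upperUnipotent 1 ∈ N := Subgroup.subset_closure (by simp)
  have torus_mem : m ∈ N := Subgroup.subset_closure (by simp)
  have weyl_mul_inv_mem : weyl (ZMod 5) * m⁻¹ ∈ N := Subgroup.subset_closure (by simp)
  have weyl_mem : weyl (ZMod 5) ∈ N := by
    simpa using mul_mem weyl_mul_inv_mem torus_mem
  have upper_mem : upperUnipotent 1 ∈ N := by
    have pow_six : (-upperUnipotent (1 : ZMod 5)) ^ 6 = upperUnipotent 1 := by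
      rw [Even.neg_pow (by decide), upperUnipotent_one_pow]
      rfl
    exact pow_six ▸ pow_mem neg_upper_mem 6
  rw [← top_le_iff, ← closure_weyl_upperUnipotent_one_eq_top 5, Subgroup.closure_le]
  rintro _ (rfl | rfl)
  exacts [weyl_mem, upper_mem]

theorem S21_eq_range :
    S21 = ((blockRep.comp (MonoidHom.inl _ _)).comp (MonoidHom.inl _ _)).range := by
  have coe_eq_emb (g : SL25) :
      (blockRep ((g, 1), 1) : Matrix (Fin 3) (Fin 3) ℂ) = emb (icosahedralRep g) := by
    rw [coe_blockRep, OneMemClass.coe_one, Units.val_one, one_smul]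
    rfl
  have alpha_eq : icosahedralRep (-upperUnipotent 1) = alpha := by
    rw [← neg_one_mul, map_mul, icosahedralRep_neg_one, icosahedralRep_upperUnipotent_one,
      neg_one_mul, alpha]
    congr 1
    ext i j
    fin_cases i <;> fin_cases j <;> rfl
  have gamma_eq :
      icosahedralRep (weyl (ZMod 5) * (torus (Units.mk0 2 two_ne_zero))⁻¹) = gamma := by
    set m : SL25 := torus (Units.mk0 2 two_ne_zero)
    rw [map_mul, ← gamma_mul_beta, ← icosahedralRep_torus_two, mul_assoc, ← map_mul,
      mul_inv_cancel, map_one, mul_one]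
  rw [← gen3_image_eq_range _ closure_S21_generators_eq_top, S21]
  simp only [Set.image_insert_eq, Set.image_singleton, MonoidHom.comp_apply, MonoidHom.inl_apply,
    coe_eq_emb, alpha_eq, icosahedralRep_torus_two, gamma_eq]
  rfl

theorem Dz_eq_range :
    Dz = ((blockRep.comp (MonoidHom.inl _ _)).comp (MonoidHom.inr _ _)).range := by
  have coe_eq_diagonal : (blockRep ((1, zeta5_isPrimitiveRoot.toRootsOfUnity), 1) :
      Matrix (Fin 3) (Fin 3) ℂ) = Matrix.diagonal ![zeta5, zeta5, 1] := by
    rw [coe_blockRep, map_one, ← blockDiag3_diagonal]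
    congr 2
    ext i j
    fin_cases i <;> fin_cases j <;> simp
  rw [← gen3_image_eq_range _ (closure_toRootsOfUnity_eq_top zeta5_isPrimitiveRoot), Dz,
    Set.image_singleton, ← coe_eq_diagonal]
  rfl

theorem coe_blockRep_lambda30 :
    (blockRep (1, lambda30_root_isPrimitiveRoot.toRootsOfUnity) : Matrix (Fin 3) (Fin 3) ℂ) =
      lambda30 := by
  rw [← Prod.mk_one_one, coe_blockRep, map_one, OneMemClass.coe_one, Units.val_one, one_smul,
    lambda30, ← blockDiag3_diagonal]
  congr 2
  ext i j
  fin_cases i <;> fin_cases j <;> rfl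

theorem L30_eq_range : L30 = (blockRep.comp (MonoidHom.inr _ _)).range := by
  rw [← gen3_image_eq_range _ (closure_toRootsOfUnity_eq_top lambda30_root_isPrimitiveRoot), L30,
    Set.image_singleton, ← coe_blockRep_lambda30]
  rfl

theorem Gt30_eq_range : Gt30 = blockRep.range := by
  have cube_isPrimitiveRoot : IsPrimitiveRoot (zeta5 ^ 3) 5 :=
    zeta5_isPrimitiveRoot.pow_of_coprime 3 (by norm_num)
  have root_pow_five : cube_isPrimitiveRoot.toRootsOfUnity ^ 5 = 1 :=
    Subtype.ext cube_isPrimitiveRoot.toRootsOfUnity.2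
  have sigma_eq : (blockRep ((weyl (ZMod 5), 1), 1) : Matrix (Fin 3) (Fin 3) ℂ) = sigma := by
    rw [coe_blockRep, icosahedralRep_weyl, OneMemClass.coe_one, Units.val_one, one_smul]
    rfl
  have tau_eq : (blockRep ((upperUnipotent 1, cube_isPrimitiveRoot.toRootsOfUnity), 1) :
      Matrix (Fin 3) (Fin 3) ℂ) = tau := by
    have pow_mul_cube : zeta5 ^ 3 * zeta5 ^ 3 = zeta5 := by
      linear_combination zeta5 * zeta5_pow_five
    have pow_mul_sq : zeta5 ^ 3 * zeta5 ^ 2 = 1 := by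
      rw [← pow_add, zeta5_pow_five]
    rw [coe_blockRep, icosahedralRep_upperUnipotent_one,
      cube_isPrimitiveRoot.val_toRootsOfUnity_coe, ← Matrix.diagonal_smul, tau,
      ← blockDiag3_diagonal]
    simp [pow_mul_cube, pow_mul_sq]
  rw [← gen3_image_eq_range _ (closure_inl_union_inr_eq_top
    (closure_weyl_one_upperUnipotent_one_prod_eq_top 5
      (closure_toRootsOfUnity_eq_top cube_isPrimitiveRoot) root_pow_five)
    (closure_toRootsOfUnity_eq_top lambda30_root_isPrimitiveRoot)), Gt30]
  simp only [Set.image_insert_eq, Set.image_singleton, MonoidHom.inl_apply,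
    MonoidHom.inr_apply, sigma_eq, tau_eq, coe_blockRep_lambda30, Set.insert_union,
    Set.singleton_union]

theorem card_SL25 : Nat.card SL25 = 120 := by
  have card_mul : Nat.card SL25 * (Fintype.card (ZMod 5) - 1) = _ := card_specialLinearGroup 2
  norm_num [-Nat.card_eq_fintype_card, ZMod.card, Fin.prod_univ_two] at card_mul
  omega

/-- `⟨σ, τ, λ₃₀⟩` is isomorphic to `SL₂(𝔽₅) × ℤ/5 × ℤ/30`. -/
def gt30MulEquiv : Gt30 ≃* SL25 × Multiplicative (ZMod 5) × Multiplicative (ZMod 30) :=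
  (MulEquiv.subgroupCongr Gt30_eq_range).trans <|
    (MonoidHom.ofInjective blockRep_injective).symm.trans <| MulEquiv.prodAssoc.trans <|
      (MulEquiv.refl SL25).prodCongr <|
        (complexRootsOfUnityMulEquiv 5).prodCongr (complexRootsOfUnityMulEquiv 30)

theorem card_Gt30 : Nat.card Gt30 = 18000 := by
  rw [Nat.card_congr gt30MulEquiv.toEquiv, Nat.card_prod, Nat.card_prod, card_SL25,
    Nat.card_congr Multiplicative.toAdd, Nat.card_congr Multiplicative.toAdd, Nat.card_zmod,
    Nat.card_zmod]

end Generators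

end Icosahedral

theorem stmt11 :
    (∀ a ∈ S21, ∀ b ∈ Dz, a * b = b * a) ∧
    (∀ a ∈ S21, ∀ b ∈ L30, a * b = b * a) ∧
    (∀ a ∈ Dz, ∀ b ∈ L30, a * b = b * a) ∧
    S21 ⊓ Dz = ⊥ ∧
    (S21 ⊔ Dz) ⊓ L30 = ⊥ ∧
    S21 ⊔ Dz ⊔ L30 = Gt30 ∧
    Nonempty (Gt30 ≃* SL25 × Multiplicative (ZMod 5) × Multiplicative (ZMod 30)) ∧
    Nat.card Gt30 = 18000 := by
  have S21_sup_Dz : S21 ⊔ Dz = (blockRep.comp (MonoidHom.inl _ _)).range := by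
    rw [S21_eq_range, Dz_eq_range, range_inl_sup_range_inr]
  have inl_injective : Function.Injective (blockRep.comp (MonoidHom.inl _ _)) :=
    blockRep_injective.comp (Prod.mk_left_injective 1)
  refine ⟨fun a ha b hb ↦ ?_, fun a ha b hb ↦ ?_, fun a ha b hb ↦ ?_, ?_, ?_, ?_,
    ⟨gt30MulEquiv⟩, card_Gt30⟩
  · rw [S21_eq_range] at ha
    rw [Dz_eq_range] at hb
    exact mul_comm_of_mem_range_inl_inr _ ha hb
  · have a_mem := S21_sup_Dz ▸ Subgroup.mem_sup_left ha
    rw [L30_eq_range] at hb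
    exact mul_comm_of_mem_range_inl_inr _ a_mem hb
  · have a_mem := S21_sup_Dz ▸ Subgroup.mem_sup_right ha
    rw [L30_eq_range] at hb
    exact mul_comm_of_mem_range_inl_inr _ a_mem hb
  · rw [S21_eq_range, Dz_eq_range, range_inl_inf_range_inr inl_injective]
  · rw [S21_sup_Dz, L30_eq_range, range_inl_inf_range_inr blockRep_injective]
  · rw [S21_sup_Dz, L30_eq_range, Gt30_eq_range, range_inl_sup_range_inr]
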